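/- Let α ∈ (1,∞), let ρ be a nonzero positive semidefinite complex matrix and σ a positive definite complex matrix of the same size. Then 𝐷̃_α(ρ‖σ) ≤ D^#_α(ρ‖σ) ≤ 𝐷̂_α(ρ‖σ), where 𝐷̃_α is the sandwiched Rényi divergence and 𝐷̂_α is the geometric Rényi divergence. -/

import Mathlib

open Matrix Filter
open scoped Kronecker Classical ComplexOrder

noncomputable def Matrix.rpowH {n : Type*} [Fintype n] [DecidableEq n]
    (A : Matrix n n ℂ) (r : ℝ) : Matrix n n ℂ :=
  if hA : A.IsHermitian then
    (hA.eigenvectorUnitary : Matrix n n ℂ) *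
      Matrix.diagonal (fun i => ((hA.eigenvalues i ^ r : ℝ) : ℂ)) *
      star (hA.eigenvectorUnitary : Matrix n n ℂ)
  else 0

noncomputable def Matrix.gmean {n : Type*} [Fintype n] [DecidableEq n]
    (β : ℝ) (S A : Matrix n n ℂ) : Matrix n n ℂ :=
  S.rpowH (1/2) * ((S.rpowH (-(1/2)) * A * S.rpowH (-(1/2))).rpowH β) * S.rpowH (1/2)

noncomputable def QSharp {n : Type*} [Fintype n] [DecidableEq n]
    (α : ℝ) (ρ σ : Matrix n n ℂ) : ℝ :=
  sInf { t : ℝ | ∃ A : Matrix n n ℂ, A.PosSemidef ∧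
    (Matrix.gmean (1/α) σ A - ρ).PosSemidef ∧ t = A.trace.re }

noncomputable def DSharp {n : Type*} [Fintype n] [DecidableEq n]
    (α : ℝ) (ρ σ : Matrix n n ℂ) : ℝ :=
  1/(α-1) * Real.logb 2 (QSharp α ρ σ)

noncomputable def opNorm {n : Type*} [Fintype n] [DecidableEq n] (A : Matrix n n ℂ) : ℝ :=
  ‖(Matrix.toEuclideanCLM (𝕜 := ℂ) A : EuclideanSpace ℂ n →L[ℂ] EuclideanSpace ℂ n)‖

noncomputable def Dtilde {n : Type*} [Fintype n] [DecidableEq n]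
    (α : ℝ) (ρ σ : Matrix n n ℂ) : ℝ :=
  1/(α-1) * Real.logb 2
    (((σ.rpowH ((1-α)/(2*α)) * ρ * σ.rpowH ((1-α)/(2*α))).rpowH α).trace.re)

noncomputable def Dhat {n : Type*} [Fintype n] [DecidableEq n]
    (α : ℝ) (ρ σ : Matrix n n ℂ) : ℝ :=
  1/(α-1) * Real.logb 2
    ((σ.rpowH (1/2) * ((σ.rpowH (-(1/2)) * ρ * σ.rpowH (-(1/2))).rpowH α) * σ.rpowH (1/2)).trace.re)

/-!
For a positive semidefinite matrix `A` the complex power `A ^ z`, taken on the support of `A`, is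
entire in `z`, and it is a contraction when `re z = 0`. Hence in the Frobenius norm
`A ^ (1 - z) * B ^ z * C ^ z` is at most `‖A‖` on the line `re z = 0` and, on writing
`B ^ z * C ^ z = B ^ (z - 1) * (B * C) * C ^ (z - 1)`, at most `‖B * C‖` on the line `re z = 1`.
Hadamard's three lines theorem gives
`‖A ^ (1 - θ) * B ^ θ * C ^ θ‖ ≤ ‖A‖ ^ (1 - θ) * ‖B * C‖ ^ θ`.

Let `M ≤ S ^ (1 / (2 * p)) * X ^ (1 / p) * S ^ (1 / (2 * p))`. For `A = M ^ (p / 2)`,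
`B = S ^ (1 / 2)`, `C = X ^ (1 / 2)` and `θ = 1 / p` the left-hand side of the inequality above is
at least `‖A‖`, so `‖A‖ ≤ ‖B * C‖`, that is `tr (M ^ p) ≤ tr (S ^ (1 / 2) * X * S ^ (1 / 2))`.
A matrix `Y` that is feasible for `QSharp` yields such a triple with `S = σ`, `p = α`,
`X = σ ^ (-1 / 2) * Y * σ ^ (-1 / 2)` and `M = σ ^ s * ρ * σ ^ s`, `s = (1 - α) / (2 * α)`; this is
the lower bound. For the upper bound, `gmean α σ ρ` is feasible because weighted geometric means
based at `σ` compose multiplicatively in the weight, and its trace is the one in `Dhat`.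
-/

section SupportCpow

open scoped ComplexConjugate MatrixOrder

/-- The complex power `x ^ z` of a nonnegative real `x`, with value `0` at `x = 0` for every `z`
(also for `z = 0`), which makes it entire in `z` for all `x`. -/
noncomputable def supportCpow (x : ℝ) (z : ℂ) : ℂ :=
  if x = 0 then 0 else (x : ℂ) ^ z

lemma supportCpow_add (x : ℝ) (z w : ℂ) :
    supportCpow x (z + w) = supportCpow x z * supportCpow x w := by
  by_cases hx : x = 0
  · simp [supportCpow, hx]
  · simp [supportCpow, hx, Complex.cpow_add]

lemma supportCpow_ofReal {x : ℝ} (hx : 0 ≤ x) {r : ℝ} (hr : r ≠ 0) :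
    supportCpow x r = (x ^ r : ℝ) := by
  by_cases hx0 : x = 0
  · simp [supportCpow, hx0, Real.zero_rpow hr]
  · simp [supportCpow, hx0, Complex.ofReal_cpow hx]

lemma supportCpow_conj {x : ℝ} (hx : 0 ≤ x) (z : ℂ) :
    supportCpow x (conj z) = conj (supportCpow x z) := by
  by_cases hx0 : x = 0
  · simp [supportCpow, hx0]
  · have harg : (x : ℂ).arg ≠ Real.pi := by
      simpa [Complex.arg_ofReal_of_nonneg hx] using Real.pi_ne_zero.symm
    simp [supportCpow, hx0, Complex.cpow_conj _ _ harg]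

lemma supportCpow_zero_le_one (x : ℝ) : supportCpow x 0 ≤ 1 := by
  by_cases hx : x = 0 <;> simp [supportCpow, hx]

lemma differentiable_supportCpow (x : ℝ) : Differentiable ℂ (supportCpow x) := by
  unfold supportCpow
  split_ifs with hx
  · exact differentiable_const 0
  · exact differentiable_id.const_cpow (Or.inl (Complex.ofReal_ne_zero.2 hx))

variable {n : Type*} [Fintype n] [DecidableEq n] {A : Matrix n n ℂ}

/-- The complex power `A ^ z` of a positive semidefinite matrix `A`, computed on the support of
`A` and extended by `0`. Thus `A ^ 0` is the projection onto the support, and `z ↦ A ^ z` is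
entire. -/
noncomputable def psdCpow (hA : A.PosSemidef) (z : ℂ) : Matrix n n ℂ :=
  Unitary.conjStarAlgAut ℂ _ hA.1.eigenvectorUnitary
    (diagonal fun i => supportCpow (hA.1.eigenvalues i) z)

lemma psdCpow_add (hA : A.PosSemidef) (z w : ℂ) :
    psdCpow hA (z + w) = psdCpow hA z * psdCpow hA w := by
  simp only [psdCpow, supportCpow_add, ← diagonal_mul_diagonal, map_mul]

lemma psdCpow_ofReal (hA : A.PosSemidef) {r : ℝ} (hr : r ≠ 0) : psdCpow hA r = A ^ r := by
  rw [CFC.rpow_eq_cfc_real hA.nonneg, hA.1.cfc_eq, IsHermitian.cfc, psdCpow]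
  congr 2 with i
  exact supportCpow_ofReal (hA.eigenvalues_nonneg i) hr

lemma psdCpow_one (hA : A.PosSemidef) : psdCpow hA 1 = A := by
  simpa [CFC.rpow_one A hA.nonneg] using psdCpow_ofReal hA one_ne_zero

lemma conjTranspose_psdCpow (hA : A.PosSemidef) (z : ℂ) :
    (psdCpow hA z)ᴴ = psdCpow hA (conj z) := by
  rw [psdCpow, ← star_eq_conjTranspose, ← map_star, star_eq_conjTranspose,
    diagonal_conjTranspose, psdCpow]
  congr 2 with i
  exact (supportCpow_conj (hA.eigenvalues_nonneg i) z).symm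

lemma psdCpow_zero_le_one (hA : A.PosSemidef) : psdCpow hA 0 ≤ 1 := by
  rw [psdCpow, ← map_one (Unitary.conjStarAlgAut ℂ _ hA.1.eigenvectorUnitary)]
  refine OrderHomClass.mono _ ?_
  rw [Matrix.le_iff, ← diagonal_one, diagonal_sub, posSemidef_diagonal_iff]
  exact fun i => sub_nonneg.2 (supportCpow_zero_le_one _)

end SupportCpow

section Interpolation

open scoped ComplexConjugate MatrixOrder Matrix.Norms.Frobenius

section FrobeniusNorm

variable {m n : Type*} [Fintype m] [Fintype n]

lemma frobenius_norm_sq (A : Matrix m n ℂ) : ‖A‖ ^ 2 = (Aᴴ * A).trace.re := by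
  rw [frobenius_norm_def, ← Real.sqrt_eq_rpow, Real.sq_sqrt (by positivity), Finset.sum_comm]
  simp [Matrix.trace, Matrix.mul_apply, ← Complex.normSq_eq_conj_mul_self,
    Complex.normSq_eq_norm_sq, -Complex.ofReal_pow]

lemma trace_re_mono {A B : Matrix n n ℂ} (h : A ≤ B) : A.trace.re ≤ B.trace.re :=
  (Complex.le_def.1 (OrderHomClass.mono (tracePositiveLinearMap n ℂ ℂ) h)).1

lemma trace_re_pos_of_ne_zero {A : Matrix n n ℂ} (hA : A.PosSemidef) (hA0 : A ≠ 0) :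
    0 < A.trace.re := by
  have h : 0 < A.trace := hA.trace_nonneg.lt_of_ne' fun h => hA0 (hA.trace_eq_zero_iff.1 h)
  exact (Complex.lt_def.1 h).1

lemma frobenius_norm_mul_le_of_conjTranspose_mul_self_le_one {l : Type*} [Fintype l]
    [DecidableEq n] {U : Matrix m n ℂ} (hU : Uᴴ * U ≤ 1) (X : Matrix n l ℂ) :
    ‖U * X‖ ≤ ‖X‖ := by
  rw [← sq_le_sq₀ (norm_nonneg _) (norm_nonneg _), frobenius_norm_sq, frobenius_norm_sq]
  apply trace_re_mono
  simpa [Matrix.le_iff, Matrix.mul_sub, Matrix.sub_mul, Matrix.mul_assoc] using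
    (Matrix.le_iff.1 hU).conjTranspose_mul_mul_same X

end FrobeniusNorm

variable {n : Type*} [Fintype n] [DecidableEq n] {A B C : Matrix n n ℂ}

lemma differentiable_psdCpow (hA : A.PosSemidef) : Differentiable ℂ (psdCpow hA) := by
  let L : (n → ℂ) →ₗ[ℂ] Matrix n n ℂ :=
    (Unitary.conjStarAlgAut ℂ _ hA.1.eigenvectorUnitary).toAlgEquiv.toLinearMap ∘ₗ
      diagonalLinearMap n ℂ ℂ
  exact L.toContinuousLinearMap.differentiable.comp
    (differentiable_pi.2 fun i => differentiable_supportCpow _)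

lemma frobenius_norm_psdCpow_mul_le (hA : A.PosSemidef) {z : ℂ} (hz : z.re = 0)
    (X : Matrix n n ℂ) : ‖psdCpow hA z * X‖ ≤ ‖X‖ := by
  apply frobenius_norm_mul_le_of_conjTranspose_mul_self_le_one
  have hz0 : conj z + z = 0 := by simp [add_comm, Complex.add_conj, hz]
  rw [conjTranspose_psdCpow, ← psdCpow_add, hz0]
  exact psdCpow_zero_le_one hA

lemma frobenius_norm_mul_psdCpow_le (hA : A.PosSemidef) {z : ℂ} (hz : z.re = 0)
    (X : Matrix n n ℂ) : ‖X * psdCpow hA z‖ ≤ ‖X‖ := by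
  rw [← frobenius_norm_conjTranspose, conjTranspose_mul, conjTranspose_psdCpow,
    ← frobenius_norm_conjTranspose X]
  exact frobenius_norm_psdCpow_mul_le hA (by simpa using hz) _

lemma frobenius_norm_psdCpow_le (hA : A.PosSemidef) (z : ℂ) :
    ‖psdCpow hA z‖ ≤ ‖psdCpow hA z.re‖ := by
  have hz : z = z.im * Complex.I + z.re := by rw [add_comm, Complex.re_add_im]
  conv_lhs => rw [hz, psdCpow_add]
  exact frobenius_norm_psdCpow_mul_le hA (by simp) _

lemma exists_norm_psdCpow_le (hA : A.PosSemidef) (a b : ℝ) :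
    ∃ c, ∀ z : ℂ, z.re ∈ Set.Icc a b → ‖psdCpow hA z‖ ≤ c := by
  have hcont : Continuous fun x : ℝ => psdCpow hA x :=
    (differentiable_psdCpow hA).continuous.comp Complex.continuous_ofReal
  obtain ⟨c, hc⟩ :=
    isCompact_Icc.exists_bound_of_continuousOn (hcont.continuousOn (s := Set.Icc a b))
  exact ⟨c, fun z hz => (frobenius_norm_psdCpow_le hA z).trans (hc _ hz)⟩

lemma bddAbove_norm_psdCpow_mul_mul (hA : A.PosSemidef) (hB : B.PosSemidef) (hC : C.PosSemidef) :
    BddAbove ((norm ∘ fun z => psdCpow hA (1 - z) * psdCpow hB z * psdCpow hC z) ''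
      Complex.HadamardThreeLines.verticalClosedStrip 0 1) := by
  obtain ⟨a, ha⟩ := exists_norm_psdCpow_le hA 0 1
  obtain ⟨b, hb⟩ := exists_norm_psdCpow_le hB 0 1
  obtain ⟨c, hc⟩ := exists_norm_psdCpow_le hC 0 1
  refine ⟨a * b * c, ?_⟩
  rintro _ ⟨z, hz, rfl⟩
  have hzA : ‖psdCpow hA (1 - z)‖ ≤ a := by
    have hz' : 0 ≤ z.re ∧ z.re ≤ 1 := hz
    exact ha _ (by simpa [and_comm] using hz')
  have hzB : ‖psdCpow hB z‖ ≤ b := hb z hz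
  have ha0 : 0 ≤ a := (norm_nonneg _).trans hzA
  have hb0 : 0 ≤ b := (norm_nonneg _).trans hzB
  calc ‖psdCpow hA (1 - z) * psdCpow hB z * psdCpow hC z‖
      ≤ ‖psdCpow hA (1 - z)‖ * ‖psdCpow hB z‖ * ‖psdCpow hC z‖ := norm_mul₃_le
    _ ≤ a * b * c := by gcongr; exact hc z hz

lemma norm_psdCpow_mul_mul_le_of_re_eq_zero (hA : A.PosSemidef) (hB : B.PosSemidef)
    (hC : C.PosSemidef) {z : ℂ} (hz : z.re = 0) :
    ‖psdCpow hA (1 - z) * psdCpow hB z * psdCpow hC z‖ ≤ ‖A‖ :=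
  calc ‖psdCpow hA (1 - z) * psdCpow hB z * psdCpow hC z‖
      ≤ ‖psdCpow hA (1 - z) * psdCpow hB z‖ := frobenius_norm_mul_psdCpow_le hC hz _
    _ ≤ ‖psdCpow hA (1 - z)‖ := frobenius_norm_mul_psdCpow_le hB hz _
    _ ≤ ‖psdCpow hA (1 - z).re‖ := frobenius_norm_psdCpow_le hA _
    _ = ‖A‖ := by simp [hz, psdCpow_one]

lemma norm_psdCpow_mul_mul_le_of_re_eq_one (hA : A.PosSemidef) (hB : B.PosSemidef)
    (hC : C.PosSemidef) {z : ℂ} (hz : z.re = 1) :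
    ‖psdCpow hA (1 - z) * psdCpow hB z * psdCpow hC z‖ ≤ ‖B * C‖ := by
  have hA0 : (1 - z).re = 0 := by simp [hz]
  have hz0 : (z - 1).re = 0 := by simp [hz]
  have hBz : psdCpow hB z = psdCpow hB (z - 1) * B := by
    simpa [psdCpow_one] using psdCpow_add hB (z - 1) 1
  have hCz : psdCpow hC z = C * psdCpow hC (z - 1) := by
    simpa [psdCpow_one] using psdCpow_add hC 1 (z - 1)
  calc ‖psdCpow hA (1 - z) * psdCpow hB z * psdCpow hC z‖
      ≤ ‖psdCpow hB z * psdCpow hC z‖ := by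
        rw [Matrix.mul_assoc]
        exact frobenius_norm_psdCpow_mul_le hA hA0 _
    _ = ‖psdCpow hB (z - 1) * (B * C * psdCpow hC (z - 1))‖ := by
        simp only [hBz, hCz, Matrix.mul_assoc]
    _ ≤ ‖B * C * psdCpow hC (z - 1)‖ := frobenius_norm_psdCpow_mul_le hB hz0 _
    _ ≤ ‖B * C‖ := frobenius_norm_mul_psdCpow_le hC hz0 _

theorem frobenius_norm_rpow_mul_rpow_mul_rpow_le (hA : A.PosSemidef) (hB : B.PosSemidef)
    (hC : C.PosSemidef) {θ : ℝ} (hθ : θ ∈ Set.Ioo 0 1) :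
    ‖A ^ (1 - θ) * B ^ θ * C ^ θ‖ ≤ ‖A‖ ^ (1 - θ) * ‖B * C‖ ^ θ := by
  have hd : Differentiable ℂ fun z => psdCpow hA (1 - z) * psdCpow hB z * psdCpow hC z :=
    (((differentiable_psdCpow hA).comp (differentiable_id.const_sub 1)).mul
      (differentiable_psdCpow hB)).mul (differentiable_psdCpow hC)
  have h := Complex.HadamardThreeLines.norm_le_interp_of_mem_verticalClosedStrip₀₁' (z := θ)
    _ (Set.Ioo_subset_Icc_self hθ) hd.diffContOnCl
    (bddAbove_norm_psdCpow_mul_mul hA hB hC)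
    (fun z => norm_psdCpow_mul_mul_le_of_re_eq_zero hA hB hC)
    (fun z => norm_psdCpow_mul_mul_le_of_re_eq_one hA hB hC)
  rw [← psdCpow_ofReal hA (sub_pos.2 hθ.2).ne', ← psdCpow_ofReal hB hθ.1.ne',
    ← psdCpow_ofReal hC hθ.1.ne']
  simpa using h

end Interpolation

section RealPowers

lemma le_of_le_rpow_mul_rpow {a b θ : ℝ} (ha : 0 ≤ a) (hb : 0 ≤ b) (hθ : 0 < θ)
    (h : a ≤ a ^ (1 - θ) * b ^ θ) : a ≤ b := by
  obtain rfl | ha0 := ha.eq_or_lt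
  · exact hb
  have hsplit : a ^ (1 - θ) * a ^ θ = a := by
    rw [← Real.rpow_add ha0, sub_add_cancel, Real.rpow_one]
  have hpow : a ^ θ ≤ b ^ θ :=
    le_of_mul_le_mul_left (hsplit.trans_le h) (Real.rpow_pos_of_pos ha0 _)
  exact (Real.rpow_le_rpow_iff ha hb hθ).1 hpow

lemma rpow_add_of_nonneg {R : Type*} [PartialOrder R] [Ring R] [StarRing R] [TopologicalSpace R]
    [StarOrderedRing R] [Algebra ℝ R] [ContinuousFunctionalCalculus ℝ R IsSelfAdjoint]
    [NonnegSpectrumClass ℝ R] (a : R) {x y : ℝ} (hx : 0 ≤ x) (hy : 0 ≤ y) :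
    a ^ (x + y) = a ^ x * a ^ y := by
  simp only [CFC.rpow_def, NNReal.rpow_add_of_nonneg _ hx hy]
  exact cfc_mul _ _ a (NNReal.continuous_rpow_const hx).continuousOn
    (NNReal.continuous_rpow_const hy).continuousOn

end RealPowers

section TraceBound

open scoped MatrixOrder Matrix.Norms.Frobenius

variable {n : Type*} [Fintype n] [DecidableEq n] {M S X : Matrix n n ℂ}

lemma conjTranspose_rpow (A : Matrix n n ℂ) (r : ℝ) : (A ^ r)ᴴ = A ^ r :=
  (IsSelfAdjoint.of_nonneg CFC.rpow_nonneg).star_eq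

lemma rpow_half_mul_rpow_half (A : Matrix n n ℂ) {r : ℝ} (hr : 0 ≤ r) :
    A ^ (r / 2) * A ^ (r / 2) = A ^ r := by
  rw [← rpow_add_of_nonneg A (by positivity) (by positivity), add_halves]

lemma rpow_mul_rpow_half_mul_conjTranspose (S X : Matrix n n ℂ) (s : ℝ) {r : ℝ} (hr : 0 ≤ r) :
    S ^ s * X ^ (r / 2) * (S ^ s * X ^ (r / 2))ᴴ = S ^ s * X ^ r * S ^ s := by
  rw [conjTranspose_mul, conjTranspose_rpow, conjTranspose_rpow, ← rpow_half_mul_rpow_half X hr]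
  simp only [Matrix.mul_assoc]

lemma frobenius_norm_rpow_half_sq (A : Matrix n n ℂ) {r : ℝ} (hr : 0 ≤ r) :
    ‖A ^ (r / 2)‖ ^ 2 = (A ^ r).trace.re := by
  rw [frobenius_norm_sq, conjTranspose_rpow, rpow_half_mul_rpow_half A hr]

lemma trace_rpow_le_norm_sq (hM : M.PosSemidef) {p : ℝ} (hp : 1 ≤ p) {K : Matrix n n ℂ}
    (h : M ≤ K * Kᴴ) : (M ^ p).trace.re ≤ ‖M ^ ((p - 1) / 2) * K‖ ^ 2 := by
  have hq : 0 ≤ (p - 1) / 2 := by linarith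
  have hMp : M ^ p = M ^ ((p - 1) / 2) * M * M ^ ((p - 1) / 2) := by
    nth_rw 3 [← CFC.rpow_one M hM.nonneg]
    rw [← rpow_add_of_nonneg M hq zero_le_one, ← rpow_add_of_nonneg M (by linarith) hq]
    congr 1
    ring
  have hK : (M ^ ((p - 1) / 2) * K) * (M ^ ((p - 1) / 2) * K)ᴴ =
      M ^ ((p - 1) / 2) * (K * Kᴴ) * M ^ ((p - 1) / 2) := by
    simp only [conjTranspose_mul, conjTranspose_rpow, Matrix.mul_assoc]
  rw [frobenius_norm_sq, trace_mul_comm, hK, hMp]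
  exact trace_re_mono ((IsSelfAdjoint.of_nonneg CFC.rpow_nonneg).conjugate_le_conjugate h)

theorem trace_rpow_le_of_le_rpow_mul_rpow_mul_rpow (hM : M.PosSemidef) (hS : S.PosSemidef)
    (hX : X.PosSemidef) {p : ℝ} (hp : 1 < p)
    (h : M ≤ S ^ (1 / p / 2) * X ^ (1 / p) * S ^ (1 / p / 2)) :
    (M ^ p).trace.re ≤ (S ^ (1 / 2 : ℝ) * X * S ^ (1 / 2 : ℝ)).trace.re := by
  have hp0 : 0 < p := zero_lt_one.trans hp
  have hθ : 1 / p ∈ Set.Ioo 0 1 := ⟨by positivity, (div_lt_one hp0).2 hp⟩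
  have hhalf (A : Matrix n n ℂ) (hA : A.PosSemidef) :
      A ^ (1 / p / 2) = (A ^ (1 / 2 : ℝ)) ^ (1 / p) := by
    rw [CFC.rpow_rpow_of_exponent_nonneg A _ _ (by norm_num) hθ.1.le hA.nonneg]
    ring_nf
  have hMq : M ^ ((p - 1) / 2) = (M ^ (p / 2)) ^ (1 - 1 / p) := by
    rw [CFC.rpow_rpow_of_exponent_nonneg M _ _ (by positivity) (sub_nonneg.2 hθ.2.le) hM.nonneg]
    congr 1
    field_simp
  set a := ‖M ^ (p / 2)‖
  set b := ‖S ^ (1 / 2 : ℝ) * X ^ (1 / 2 : ℝ)‖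
  have hinterp : ‖M ^ ((p - 1) / 2) * (S ^ (1 / p / 2) * X ^ (1 / p / 2))‖ ≤
      a ^ (1 - 1 / p) * b ^ (1 / p) := by
    rw [hMq, hhalf S hS, hhalf X hX, ← Matrix.mul_assoc]
    exact frobenius_norm_rpow_mul_rpow_mul_rpow_le CFC.rpow_nonneg.posSemidef
      CFC.rpow_nonneg.posSemidef CFC.rpow_nonneg.posSemidef hθ
  have hself : a ≤ a ^ (1 - 1 / p) * b ^ (1 / p) := by
    refine le_trans ?_ hinterp
    rw [← sq_le_sq₀ (norm_nonneg _) (norm_nonneg _), frobenius_norm_rpow_half_sq M hp0.le]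
    exact trace_rpow_le_norm_sq hM hp.le (h.trans_eq
      (rpow_mul_rpow_half_mul_conjTranspose S X _ hθ.1.le).symm)
  have hab : a ≤ b := le_of_le_rpow_mul_rpow (norm_nonneg _) (norm_nonneg _) hθ.1 hself
  calc (M ^ p).trace.re = a ^ 2 := (frobenius_norm_rpow_half_sq M hp0.le).symm
    _ ≤ b ^ 2 := pow_le_pow_left₀ (norm_nonneg _) hab 2
    _ = (S ^ (1 / 2 : ℝ) * X * S ^ (1 / 2 : ℝ)).trace.re := by
      rw [frobenius_norm_sq, trace_mul_comm, rpow_mul_rpow_half_mul_conjTranspose S X _ zero_le_one,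
        CFC.rpow_one X hX.nonneg]

end TraceBound

section Divergences

open scoped MatrixOrder

variable {n : Type*} [Fintype n] [DecidableEq n] {ρ σ A : Matrix n n ℂ} {α : ℝ}

lemma rpowH_eq_rpow (hA : A.PosSemidef) (r : ℝ) : A.rpowH r = A ^ r := by
  rw [CFC.rpow_eq_cfc_real hA.nonneg, hA.1.cfc_eq, IsHermitian.cfc,
    Unitary.conjStarAlgAut_apply, rpowH, dif_pos hA.1]
  rfl

lemma posSemidef_rpow_mul_mul_rpow (hA : A.PosSemidef) (σ : Matrix n n ℂ) (r : ℝ) :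
    (σ ^ r * A * σ ^ r).PosSemidef := by
  simpa [conjTranspose_rpow] using hA.mul_mul_conjTranspose_same (σ ^ r)

lemma gmean_eq (hσ : σ.PosSemidef) (hA : A.PosSemidef) (β : ℝ) :
    gmean β σ A = σ ^ (1 / 2 : ℝ) * (σ ^ (-(1 / 2) : ℝ) * A * σ ^ (-(1 / 2) : ℝ)) ^ β *
      σ ^ (1 / 2 : ℝ) := by
  simp only [gmean, rpowH_eq_rpow hσ, rpowH_eq_rpow (posSemidef_rpow_mul_mul_rpow hA σ _)]

lemma gmean_posSemidef (hσ : σ.PosSemidef) (hA : A.PosSemidef) (β : ℝ) :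
    (gmean β σ A).PosSemidef := by
  rw [gmean_eq hσ hA]
  exact posSemidef_rpow_mul_mul_rpow CFC.rpow_nonneg.posSemidef σ _

lemma rpow_neg_conj_rpow_conj (hσ : σ.PosDef) (r : ℝ) (B : Matrix n n ℂ) :
    σ ^ (-r) * (σ ^ r * B * σ ^ r) * σ ^ (-r) = B := by
  have hσ' : IsStrictlyPositive σ := isStrictlyPositive_iff_posDef.2 hσ
  have hl : σ ^ (-r) * σ ^ r = 1 := CFC.rpow_neg_mul_rpow r
  have hr : σ ^ r * σ ^ (-r) = 1 := CFC.rpow_mul_rpow_neg r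
  rw [Matrix.mul_assoc (σ ^ r), ← Matrix.mul_assoc (σ ^ (-r)), hl, Matrix.one_mul,
    Matrix.mul_assoc, hr, Matrix.mul_one]

lemma gmean_one (hσ : σ.PosDef) (hA : A.PosSemidef) : gmean 1 σ A = A := by
  rw [gmean_eq hσ.posSemidef hA,
    CFC.rpow_one _ (posSemidef_rpow_mul_mul_rpow hA σ _).nonneg]
  simpa using rpow_neg_conj_rpow_conj hσ (-(1 / 2)) A

lemma gmean_gmean (hσ : σ.PosDef) (hA : A.PosSemidef) {β γ : ℝ} (hβ : 0 ≤ β) (hγ : 0 ≤ γ) :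
    gmean γ σ (gmean β σ A) = gmean (β * γ) σ A := by
  rw [gmean_eq hσ.posSemidef (gmean_posSemidef hσ.posSemidef hA β), gmean_eq hσ.posSemidef hA,
    gmean_eq hσ.posSemidef hA, rpow_neg_conj_rpow_conj hσ,
    CFC.rpow_rpow_of_exponent_nonneg _ _ _ hβ hγ (posSemidef_rpow_mul_mul_rpow hA σ _).nonneg]

lemma gmean_one_div_gmean (hα : 0 < α) (hρ : ρ.PosSemidef) (hσ : σ.PosDef) :
    gmean (1 / α) σ (gmean α σ ρ) = ρ := by
  rw [gmean_gmean hσ hρ hα.le (by positivity), mul_one_div_cancel hα.ne', gmean_one hσ hρ]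

/-- The trace functional of the sandwiched Rényi divergence: `Dtilde α ρ σ` is definitionally
`1 / (α - 1) * Real.logb 2 (QTilde α ρ σ)`. -/
noncomputable def QTilde (α : ℝ) (ρ σ : Matrix n n ℂ) : ℝ :=
  ((σ.rpowH ((1 - α) / (2 * α)) * ρ * σ.rpowH ((1 - α) / (2 * α))).rpowH α).trace.re

lemma QTilde_eq (hρ : ρ.PosSemidef) (hσ : σ.PosSemidef) (α : ℝ) :
    QTilde α ρ σ =
      ((σ ^ ((1 - α) / (2 * α)) * ρ * σ ^ ((1 - α) / (2 * α))) ^ α).trace.re := by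
  rw [QTilde, rpowH_eq_rpow hσ, rpowH_eq_rpow (posSemidef_rpow_mul_mul_rpow hρ σ _)]

lemma QTilde_pos (hα : 0 < α) (hρ : ρ.PosSemidef) (hρ0 : ρ ≠ 0) (hσ : σ.PosDef) :
    0 < QTilde α ρ σ := by
  rw [QTilde_eq hρ hσ.posSemidef]
  refine trace_re_pos_of_ne_zero CFC.rpow_nonneg.posSemidef fun h => hρ0 ?_
  have hM := CFC.rpow_rpow_of_exponent_nonneg _ α α⁻¹ hα.le (inv_nonneg.2 hα.le)
    (posSemidef_rpow_mul_mul_rpow hρ σ ((1 - α) / (2 * α))).nonneg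
  rw [h, mul_inv_cancel₀ hα.ne', CFC.rpow_one _ (posSemidef_rpow_mul_mul_rpow hρ σ _).nonneg] at hM
  have h0 : (0 : Matrix n n ℂ) ^ α⁻¹ = 0 := CFC.zero_rpow (inv_ne_zero hα.ne')
  rw [← rpow_neg_conj_rpow_conj hσ ((1 - α) / (2 * α)) ρ, ← hM, h0]
  simp

lemma QTilde_le_trace (hα : 1 < α) (hρ : ρ.PosSemidef) (hσ : σ.PosDef) (hA : A.PosSemidef)
    (h : ρ ≤ gmean (1 / α) σ A) : QTilde α ρ σ ≤ A.trace.re := by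
  have hα0 : α ≠ 0 := (zero_lt_one.trans hα).ne'
  have hadd (x y : ℝ) : σ ^ x * σ ^ y = σ ^ (x + y) := (CFC.rpow_add hσ.isUnit).symm
  have hexp : (1 - α) / (2 * α) + 1 / 2 = 1 / α / 2 := by field_simp [hα0]; ring
  set s := (1 - α) / (2 * α)
  set X := σ ^ (-(1 / 2) : ℝ) * A * σ ^ (-(1 / 2) : ℝ)
  have hX : X.PosSemidef := posSemidef_rpow_mul_mul_rpow hA σ _
  have hXA : σ ^ (1 / 2 : ℝ) * X * σ ^ (1 / 2 : ℝ) = A := by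
    simpa only [neg_neg] using rpow_neg_conj_rpow_conj hσ (-(1 / 2)) A
  have hle : σ ^ s * ρ * σ ^ s ≤ σ ^ (1 / α / 2) * X ^ (1 / α) * σ ^ (1 / α / 2) :=
    calc σ ^ s * ρ * σ ^ s
        ≤ σ ^ s * gmean (1 / α) σ A * σ ^ s :=
          (IsSelfAdjoint.of_nonneg CFC.rpow_nonneg).conjugate_le_conjugate h
      _ = (σ ^ s * σ ^ (1 / 2 : ℝ)) * X ^ (1 / α) * (σ ^ (1 / 2 : ℝ) * σ ^ s) := by
          rw [gmean_eq hσ.posSemidef hA]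
          simp only [X, Matrix.mul_assoc]
      _ = σ ^ (1 / α / 2) * X ^ (1 / α) * σ ^ (1 / α / 2) := by
          rw [hadd, hadd, add_comm (1 / 2), hexp]
  calc QTilde α ρ σ = ((σ ^ s * ρ * σ ^ s) ^ α).trace.re := QTilde_eq hρ hσ.posSemidef α
    _ ≤ (σ ^ (1 / 2 : ℝ) * X * σ ^ (1 / 2 : ℝ)).trace.re :=
      trace_rpow_le_of_le_rpow_mul_rpow_mul_rpow (posSemidef_rpow_mul_mul_rpow hρ σ s)
        hσ.posSemidef hX hα hle
    _ = A.trace.re := by rw [hXA]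

lemma QSharp_le_trace_gmean (hα : 0 < α) (hρ : ρ.PosSemidef) (hσ : σ.PosDef) :
    QSharp α ρ σ ≤ (gmean α σ ρ).trace.re := by
  refine csInf_le ⟨0, ?_⟩ ⟨_, gmean_posSemidef hσ.posSemidef hρ α, ?_, rfl⟩
  · rintro _ ⟨A, hA, -, rfl⟩
    exact (Complex.le_def.1 hA.trace_nonneg).1
  · rw [gmean_one_div_gmean hα hρ hσ, sub_self]
    exact PosSemidef.zero

lemma QTilde_le_QSharp (hα : 1 < α) (hρ : ρ.PosSemidef) (hσ : σ.PosDef) :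
    QTilde α ρ σ ≤ QSharp α ρ σ := by
  refine le_csInf ⟨_, gmean α σ ρ, gmean_posSemidef hσ.posSemidef hρ α, ?_, rfl⟩ ?_
  · rw [gmean_one_div_gmean (zero_lt_one.trans hα) hρ hσ, sub_self]
    exact PosSemidef.zero
  · rintro _ ⟨A, hA, h, rfl⟩
    exact QTilde_le_trace hα hρ hσ hA h

end Divergences

/-- the sandwiched Rényi divergence lower bounds D^#_α, which is
itself upper bounded by the geometric Rényi divergence. -/
theorem Dtilde_le_DSharp_le_Dhat
    {n : Type*} [Fintype n] [DecidableEq n]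
    (α : ℝ) (hα : 1 < α)
    (ρ σ : Matrix n n ℂ) (hρ : ρ.PosSemidef) (hρ0 : ρ ≠ 0) (hσ : σ.PosDef) :
    Dtilde α ρ σ ≤ DSharp α ρ σ ∧ DSharp α ρ σ ≤ Dhat α ρ σ := by
  have hα0 : 0 < α := zero_lt_one.trans hα
  have hc : 0 ≤ 1 / (α - 1) := one_div_nonneg.2 (sub_nonneg.2 hα.le)
  have hpos : 0 < QTilde α ρ σ := QTilde_pos hα0 hρ hρ0 hσ
  have hlower : QTilde α ρ σ ≤ QSharp α ρ σ := QTilde_le_QSharp hα hρ hσ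
  have hupper : QSharp α ρ σ ≤ (gmean α σ ρ).trace.re := QSharp_le_trace_gmean hα0 hρ hσ
  exact ⟨mul_le_mul_of_nonneg_left (Real.logb_le_logb_of_le one_lt_two hpos hlower) hc,
    mul_le_mul_of_nonneg_left
      (Real.logb_le_logb_of_le one_lt_two (hpos.trans_le hlower) hupper) hc⟩
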